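/- Let K be an infinite field, S = K[x_1,...,x_n], and let I ⊆ S and J ⊆ S be homogeneous ideals. Then for a general change of coordinates g ∈ GL_n(K), one has H(I ∩ g(J), d) ≤ H(Gin_lex(I) ∩ Gin_oplex(J), d) for all d ≥ 0. -/

import Mathlib

open MvPolynomial TensorProduct CategoryTheory

noncomputable section

/-- The polynomial ring `S = K[x_1,...,x_n]`, standard graded. -/
abbrev PS (K : Type) [Field K] (n : ℕ) : Type := MvPolynomial (Fin n) K

variable (K : Type) [Field K] (n : ℕ)

/-- An ideal of `S` is homogeneous if it contains all homogeneous components of its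
elements. -/
def IsHomog (I : Ideal (PS K n)) : Prop :=
  ∀ f ∈ I, ∀ d : ℕ, MvPolynomial.homogeneousComponent d f ∈ I

/-- The change of coordinates of `S` induced by `g ∈ GL_n(K)`, determined by
`g(x_i) = ∑_j g_{ji} x_j`. -/
def coordChange (g : GL (Fin n) K) : PS K n →ₐ[K] PS K n :=
  MvPolynomial.aeval (fun i => ∑ j, ((g : Matrix (Fin n) (Fin n) K) j i) • MvPolynomial.X j)

/-- A property `P` holds for a general change of coordinates `g ∈ GL_n(K)` if there is a
nonempty Zariski open subset `U ⊆ GL_n(K)` on which it holds; equivalently (as `GL_n(K)` is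
an irreducible variety over the infinite field `K`) there is a nonzero polynomial `F` in the
matrix entries such that `P g` holds whenever `F` does not vanish at `g`. -/
def generally (P : GL (Fin n) K → Prop) : Prop :=
  ∃ F : MvPolynomial (Fin n × Fin n) K, F ≠ 0 ∧
    ∀ g : GL (Fin n) K,
      MvPolynomial.eval (fun p => (g : Matrix (Fin n) (Fin n) K) p.1 p.2) F ≠ 0 → P g

/-- The Hilbert function: `H(I,d) = dim_K I_d`. -/
def hilb (I : Ideal (PS K n)) (d : ℕ) : ℕ :=
  Module.finrank K ↥(Submodule.restrictScalars K I ⊓ homogeneousSubmodule (Fin n) K d)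

/-- `a <_lex b` for the lexicographic order induced by `x_1 > x_2 > ⋯ > x_n`. -/
def lexLt (a b : Fin n →₀ ℕ) : Prop := Finsupp.Lex (· < ·) (· < ·) a b

/-- `a <_oplex b` for the (opposite) lexicographic order induced by `x_n > ⋯ > x_1`. -/
def oplexLt (a b : Fin n →₀ ℕ) : Prop := Finsupp.Lex (· > ·) (· < ·) a b

/-- The total degree of an exponent vector. -/
def expDeg (m : Fin n →₀ ℕ) : ℕ := ∑ i, m i

/-- A monomial ideal: together with any polynomial it contains each of its monomials. -/
def IsMonomialIdeal (I : Ideal (PS K n)) : Prop :=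
  ∀ f ∈ I, ∀ m ∈ f.support, MvPolynomial.monomial m (1 : K) ∈ I

/-- A lex ideal: a monomial ideal whose monomials form a lex set. -/
def IsLexIdeal (I : Ideal (PS K n)) : Prop :=
  IsMonomialIdeal K n I ∧ ∀ u v : Fin n →₀ ℕ, expDeg n u = expDeg n v →
    MvPolynomial.monomial u (1 : K) ∈ I → lexLt n u v →
      MvPolynomial.monomial v (1 : K) ∈ I

/-- An opposite lex ideal: a monomial ideal whose monomials form an opposite lex set. -/
def IsOplexIdeal (I : Ideal (PS K n)) : Prop :=
  IsMonomialIdeal K n I ∧ ∀ u v : Fin n →₀ ℕ, expDeg n u = expDeg n v →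
    MvPolynomial.monomial u (1 : K) ∈ I → oplexLt n u v →
      MvPolynomial.monomial v (1 : K) ∈ I

/-- The initial ideal `in_r(I)` of `I` with respect to a (strict) monomial order `r`:
the ideal generated by the `r`-maximal monomials of the nonzero elements of `I`. -/
def initialIdealO (r : (Fin n →₀ ℕ) → (Fin n →₀ ℕ) → Prop) (I : Ideal (PS K n)) :
    Ideal (PS K n) :=
  Ideal.span {g | ∃ f ∈ I, ∃ m ∈ f.support,
    (∀ m' ∈ f.support, m' = m ∨ r m' m) ∧ g = MvPolynomial.monomial m (1 : K)}

section Aux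

variable {K : Type} [Field K] {n : ℕ}

/-- The degree `d` piece of an ideal. -/
abbrev dgPiece (A : Ideal (PS K n)) (d : ℕ) : Submodule K (PS K n) :=
  Submodule.restrictScalars K A ⊓ homogeneousSubmodule (Fin n) K d

/-- `m` is the leading monomial of `f` with respect to `r`. -/
def IsLM {R : Type} [CommRing R] (r : (Fin n →₀ ℕ) → (Fin n →₀ ℕ) → Prop)
    (f : MvPolynomial (Fin n) R) (m : Fin n →₀ ℕ) : Prop :=
  m ∈ f.support ∧ ∀ m' ∈ f.support, m' = m ∨ r m' m

/-- Weight of an exponent. -/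
def wsum (ω : Fin n → ℕ) (a : Fin n →₀ ℕ) : ℕ := ∑ i, ω i * a i

structure OrdOK (r : (Fin n →₀ ℕ) → (Fin n →₀ ℕ) → Prop) : Prop where
  add : ∀ a b c, r a b → r (a + c) (b + c)
  tri : ∀ a b, a = b ∨ r a b ∨ r b a
  wt : ∀ d : ℕ, ∃ ω : Fin n → ℕ, ∀ a b : Fin n →₀ ℕ, a.degree = d → b.degree = d →
    r a b → wsum ω a < wsum ω b

lemma geom_sum_aux (d i : ℕ) : ∑ j ∈ Finset.range i, (d + 1) ^ j * d + 1 = (d + 1) ^ i := by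
  induction i with
  | zero => simp
  | succ k ih => rw [Finset.sum_range_succ, pow_succ]; linarith

lemma wsum_lt_aux (d : ℕ) (e : Fin n → ℕ) (he : Function.Injective e)
    (a b : Fin n →₀ ℕ) (ha : a.degree = d) (i : Fin n)
    (heq : ∀ j, e i < e j → a j = b j) (hlt : a i < b i) :
    wsum (fun j => (d + 1) ^ e j) a < wsum (fun j => (d + 1) ^ e j) b := by
  classical
  have hle : ∀ j, a j ≤ d := fun j => by
    rw [← ha]; exact Finsupp.le_degree j a
  unfold wsum
  have h1 : ∑ j ∈ Finset.univ.filter (fun j => e j < e i), (d + 1) ^ e j * d + 1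
      ≤ (d + 1) ^ e i := by
    rw [← geom_sum_aux d (e i)]
    have : ∑ j ∈ Finset.univ.filter (fun j => e j < e i), (d + 1) ^ e j * d
      = ∑ k ∈ (Finset.univ.filter (fun j => e j < e i)).image e, (d + 1) ^ k * d := by
      rw [Finset.sum_image (fun x _ y _ h => he h)]
    rw [this]
    gcongr
    intro k hk
    simp only [Finset.mem_image, Finset.mem_filter, Finset.mem_univ, true_and] at hk
    obtain ⟨j, hj, rfl⟩ := hk
    simpa using hj
  -- termwise comparison
  have h2 : ∑ j, (d + 1) ^ e j * a j + (d + 1) ^ e i ≤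
      ∑ j, (d + 1) ^ e j * b j + ∑ j ∈ Finset.univ.filter (fun j => e j < e i), (d + 1) ^ e j * d := by
    have e1 : (d + 1) ^ e i = ∑ j, if j = i then (d + 1) ^ e i else 0 := by simp
    rw [e1, Finset.sum_filter, ← Finset.sum_add_distrib, ← Finset.sum_add_distrib]
    refine Finset.sum_le_sum fun j _ => ?_
    rcases lt_trichotomy (e j) (e i) with h | h | h
    · have : j ≠ i := fun hh => by subst hh; exact lt_irrefl _ h
      simp only [this, if_false, h, if_true]
      have := Nat.mul_le_mul_left ((d + 1) ^ e j) (hle j)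
      omega
    · have := he h
      subst this
      simp only [if_true, lt_irrefl, if_false]
      have := Nat.mul_le_mul_left ((d + 1) ^ e j) (Nat.succ_le_of_lt hlt)
      rw [Nat.mul_succ] at this
      omega
    · have h3 : j ≠ i := fun hh => by subst hh; exact lt_irrefl _ h
      simp [h3, heq j h]
  show ∑ j, (d + 1) ^ e j * a j < ∑ j, (d + 1) ^ e j * b j
  omega

lemma lexOK : OrdOK (lexLt n) where
  add a b c h := by
    obtain ⟨j, h1, h2⟩ := Finsupp.lex_def.1 h
    exact Finsupp.lex_def.2 ⟨j, fun d hd => by simp [h1 d hd], by simpa using h2⟩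
  tri a b := by
    rcases lt_trichotomy (toLex a) (toLex b) with h | h | h
    · exact Or.inr (Or.inl h)
    · exact Or.inl h
    · exact Or.inr (Or.inr h)
  wt d := by
    refine ⟨fun j => (d + 1) ^ (n - 1 - j.val), fun a b ha hb h => ?_⟩
    obtain ⟨i, h1, h2⟩ := Finsupp.lex_def.1 h
    refine wsum_lt_aux d (fun j : Fin n => n - 1 - j.val) (fun x y hxy => ?_) a b ha i
      (fun j hj => h1 j ?_) h2
    · have hxy' : n - 1 - x.val = n - 1 - y.val := hxy
      ext; omega
    · have hj' : n - 1 - i.val < n - 1 - j.val := hj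
      rw [Fin.lt_def]; omega

lemma oplexOK : OrdOK (oplexLt n) where
  add a b c h := by
    obtain ⟨j, h1, h2⟩ := Finsupp.lex_def.1 h
    exact Finsupp.lex_def.2 ⟨j, fun d hd => by simp [h1 d hd], by simpa using h2⟩
  tri a b := by
    rcases lt_trichotomy (toColex a) (toColex b) with h | h | h
    · exact Or.inr (Or.inl h)
    · exact Or.inl h
    · exact Or.inr (Or.inr h)
  wt d := by
    refine ⟨fun j => (d + 1) ^ (j.val), fun a b ha hb h => ?_⟩
    obtain ⟨i, h1, h2⟩ := Finsupp.lex_def.1 h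
    refine wsum_lt_aux d (fun j : Fin n => j.val) (fun x y hxy => ?_) a b ha i
      (fun j hj => h1 j ?_) h2
    · exact Fin.ext hxy
    · exact hj

instance (d : ℕ) : FiniteDimensional K (homogeneousSubmodule (Fin n) K d) :=
  Module.Finite.iff_fg.2 (homogeneousSubmodule_fg ..)

instance (A : Ideal (PS K n)) (d : ℕ) : FiniteDimensional K (dgPiece A d) :=
  Submodule.finiteDimensional_of_le (inf_le_right : _ ≤ homogeneousSubmodule (Fin n) K d)

lemma deg_of_homog {R : Type} [CommRing R] {f : MvPolynomial (Fin n) R} {d : ℕ}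
    (hf : f.IsHomogeneous d) {m : Fin n →₀ ℕ} (hm : m ∈ f.support) : m.degree = d := by
  rw [Finsupp.degree_eq_weight_one]
  exact hf (mem_support_iff.1 hm)

/-- Triangular families are linearly independent. -/
lemma linIndep_of_LM {ι α : Type} [Finite ι] [LinearOrder α] (key : (Fin n →₀ ℕ) → α)
    (f : ι → PS K n) (m : ι → Fin n →₀ ℕ) (hm : Function.Injective m)
    (h : ∀ i, IsLM (fun a b => key a < key b) (f i) (m i)) : LinearIndependent K f := by
  classical
  have := Fintype.ofFinite ι
  rw [Fintype.linearIndependent_iff]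
  intro c hc
  by_contra! hne
  obtain ⟨i0, hi0⟩ := hne
  obtain ⟨i, hi, hmax⟩ := Finset.exists_max_image (Finset.univ.filter fun i => c i ≠ 0)
    (fun i => key (m i)) ⟨i0, by simpa using hi0⟩
  have := congrArg (coeff (m i)) hc
  rw [coeff_sum, Finset.sum_eq_single i] at this
  · simp only [coeff_smul, coeff_zero, smul_eq_mul, mul_eq_zero] at this
    rcases this with h1 | h1
    · simp [h1] at hi
    · exact (mem_support_iff.1 (h i).1) h1
  · intro j _ hji
    by_cases hcj : c j = 0
    · simp [hcj]
    · rw [coeff_smul]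
      by_contra hcon
      have hms : m i ∈ (f j).support := by
        rw [mem_support_iff]; intro h0; exact hcon (by simp [h0])
      rcases (h j).2 _ hms with h1 | h1
      · exact hji (hm h1).symm
      · exact absurd (hmax j (by simpa using hcj)) (not_le.2 h1)
  · simp

/-- The set of leading monomials of a subspace. -/
def LMset (r : (Fin n →₀ ℕ) → (Fin n →₀ ℕ) → Prop) (W : Submodule K (PS K n)) :
    Set (Fin n →₀ ℕ) := {m | ∃ f ∈ W, IsLM r f m}

lemma LMset_deg {r : (Fin n →₀ ℕ) → (Fin n →₀ ℕ) → Prop} {W : Submodule K (PS K n)} {d : ℕ}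
    (hW : W ≤ homogeneousSubmodule (Fin n) K d) {m} (hm : m ∈ LMset r W) : m.degree = d := by
  obtain ⟨f, hf, h1, _⟩ := hm
  exact deg_of_homog (hW hf) h1

lemma LMset_finite {r : (Fin n →₀ ℕ) → (Fin n →₀ ℕ) → Prop} {W : Submodule K (PS K n)} {d : ℕ}
    (hW : W ≤ homogeneousSubmodule (Fin n) K d) : (LMset r W).Finite :=
  (Finsupp.finite_of_degree_eq (σ := Fin n) d).subset fun _ hm => LMset_deg hW hm

lemma exists_LM {r : (Fin n →₀ ℕ) → (Fin n →₀ ℕ) → Prop} (hr : OrdOK r) {d : ℕ}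
    {R : Type} [CommRing R] {f : MvPolynomial (Fin n) R} (hf : f.IsHomogeneous d)
    (h0 : f ≠ 0) : ∃ m, IsLM r f m := by
  obtain ⟨ω, hω⟩ := hr.wt d
  obtain ⟨m, hm, hmax⟩ := Finset.exists_max_image f.support (wsum ω) (support_nonempty.2 h0)
  refine ⟨m, hm, fun m' hm' => ?_⟩
  rcases hr.tri m' m with h | h | h
  · exact Or.inl h
  · exact Or.inr h
  · exact absurd (hmax m' hm') (not_le.2 (hω _ _ (deg_of_homog hf hm) (deg_of_homog hf hm') h))

lemma finrank_eq_LM {r : (Fin n →₀ ℕ) → (Fin n →₀ ℕ) → Prop} (hr : OrdOK r) {d : ℕ}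
    {W : Submodule K (PS K n)} (hW : W ≤ homogeneousSubmodule (Fin n) K d) :
    Module.finrank K W = (LMset r W).ncard := by
  classical
  have hfd : FiniteDimensional K W := Submodule.finiteDimensional_of_le hW
  have hfin := LMset_finite (r := r) hW
  have := hfin.to_subtype
  have := Fintype.ofFinite (LMset r W)
  have hcard : Fintype.card (LMset r W) = (LMset r W).ncard := by
    rw [← Nat.card_coe_set_eq, Nat.card_eq_fintype_card]
  apply le_antisymm
  · let φ : W →ₗ[K] (LMset r W → K) :=
      LinearMap.pi fun m => (lcoeff K m.1).comp W.subtype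
    have hinj : Function.Injective φ := by
      rw [← LinearMap.ker_eq_bot, LinearMap.ker_eq_bot']
      intro f hf
      by_contra h0
      obtain ⟨m, hm⟩ := exists_LM hr (hW f.2) (fun h => h0 (Subtype.ext h))
      exact mem_support_iff.1 hm.1 (congrFun hf ⟨m, f.1, f.2, hm⟩)
    have := LinearMap.finrank_le_finrank_of_injective hinj
    rwa [Module.finrank_fintype_fun_eq_card, hcard] at this
  · obtain ⟨ω, hω⟩ := hr.wt d
    choose f hf hlm using fun m : LMset r W => m.2
    have hli : LinearIndependent K f := linIndep_of_LM (wsum ω) f (fun m => m.1)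
      Subtype.val_injective fun m => ⟨(hlm m).1, fun m' hm' => by
        rcases (hlm m).2 m' hm' with h | h
        · exact Or.inl h
        · exact Or.inr (hω _ _ (deg_of_homog (hW (hf m)) hm')
            (deg_of_homog (hW (hf m)) (hlm m).1) h)⟩
    have hli' : LinearIndependent K (fun m => (⟨f m, hf m⟩ : W)) :=
      LinearIndependent.of_comp W.subtype hli
    have := hli'.fintype_card_le_finrank
    rwa [hcard] at this

/-- Moving a leading monomial up inside a homogeneous ideal. -/
lemma LM_up {r : (Fin n →₀ ℕ) → (Fin n →₀ ℕ) → Prop}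
    (hadd : ∀ a b c, r a b → r (a + c) (b + c)) {A : Ideal (PS K n)} (hA : IsHomog K n A)
    {f : PS K n} (hf : f ∈ A) {m0 m : Fin n →₀ ℕ} (hlm : IsLM r f m0) (hle : m0 ≤ m) :
    m ∈ LMset r (dgPiece A m.degree) := by
  classical
  obtain ⟨c, rfl⟩ := exists_add_of_le hle
  refine ⟨homogeneousComponent (m0 + c).degree (f * monomial c 1),
    ⟨hA _ (A.mul_mem_right _ hf) _, homogeneousComponent_mem _ _⟩, ?_, ?_⟩
  · rw [support_homogeneousComponent, Finset.mem_filter, mem_support_iff, coeff_mul_monomial, mul_one]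
    exact ⟨mem_support_iff.1 hlm.1, rfl⟩
  · intro m' hm'
    rw [support_homogeneousComponent, Finset.mem_filter, mem_support_iff, coeff_mul_monomial'] at hm'
    obtain ⟨h1, h2⟩ := hm'
    split_ifs at h1 with h3
    · obtain ⟨b, rfl⟩ := exists_add_of_le h3
      rw [add_tsub_cancel_left, mul_one] at h1
      rcases hlm.2 b (mem_support_iff.2 h1) with h | h
      · left; rw [h, add_comm]
      · right; rw [add_comm c]; exact hadd _ _ _ h
    · simp at h1

/-- Degree pieces of the initial ideal. -/
lemma dg_initial {r : (Fin n →₀ ℕ) → (Fin n →₀ ℕ) → Prop} (hr : OrdOK r)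
    {A : Ideal (PS K n)} (hA : IsHomog K n A) (d : ℕ) :
    dgPiece (initialIdealO K n r A) d = restrictSupport K (LMset r (dgPiece A d)) := by
  have key : initialIdealO K n r A =
      Ideal.span ((fun s => monomial s (1 : K)) '' {m | ∃ f ∈ A, IsLM r f m}) := by
    unfold initialIdealO
    congr 1
    ext g
    constructor
    · rintro ⟨f, hf, m, hm, h, rfl⟩
      exact ⟨m, ⟨f, hf, hm, h⟩, rfl⟩
    · rintro ⟨m, ⟨f, hf, hm, h⟩, rfl⟩
      exact ⟨f, hf, m, hm, h, rfl⟩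
  ext p
  simp only [Submodule.mem_inf, Submodule.restrictScalars_mem, mem_homogeneousSubmodule,
    mem_restrictSupport_iff, key, mem_ideal_span_monomial_image]
  constructor
  · rintro ⟨h1, h2⟩ m hm
    obtain ⟨m0, ⟨f, hf, hlm⟩, hle⟩ := h1 m hm
    have := LM_up hr.add hA hf hlm hle
    rwa [deg_of_homog h2 hm] at this
  · intro h
    refine ⟨fun m hm => ?_, fun m hm => ?_⟩
    · obtain ⟨f, hf, hlm⟩ := h hm
      exact ⟨m, ⟨f, hf.1, hlm⟩, le_rfl⟩
    · refine Eq.trans (congrFun (congrArg DFunLike.coe Finsupp.degree_eq_weight_one) m).symm ?_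
      exact LMset_deg (W := dgPiece A d) inf_le_right (h (mem_support_iff.2 hm))

lemma finrank_restrictSupport (P : Set (Fin n →₀ ℕ)) :
    Module.finrank K (restrictSupport K P) = P.ncard := by
  rw [Module.finrank_eq_nat_card_basis (basisRestrictSupport K P), Nat.card_coe_set_eq]

lemma finite_min (M : Set (Fin n →₀ ℕ)) : ∃ M0 : Finset (Fin n →₀ ℕ), (∀ m ∈ M0, m ∈ M) ∧
    ∀ m ∈ M, ∃ m0 ∈ M0, m0 ≤ m := by
  have hfin : {m | Minimal (· ∈ M) m}.Finite := by
    refine IsAntichain.finite_of_wellQuasiOrdered (r := (· ≤ ·)) ?_ wellQuasiOrdered_le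
    intro a ha b hb hne hab
    exact hne (le_antisymm hab (hb.2 ha.1 hab))
  refine ⟨hfin.toFinset, fun m hm => ?_, fun m hm => ?_⟩
  · have := hfin.mem_toFinset.1 hm
    exact this.1
  · obtain ⟨b, hb, hmin⟩ := exists_minimal_le_of_wellFoundedLT (· ∈ M) m hm
    exact ⟨b, hfin.mem_toFinset.2 hmin, hb⟩

/-- Base change of a functional. -/
def fnl {σ : Type} (φ : MvPolynomial σ K →ₗ[K] K) (R : Type) [CommRing R] [Algebra K R] :
    MvPolynomial σ R →ₗ[R] R :=
  (basisMonomials σ R).constr R fun m => algebraMap K R (φ (monomial m 1))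

lemma fnl_monomial {σ : Type} (φ : MvPolynomial σ K →ₗ[K] K) {R : Type} [CommRing R] [Algebra K R]
    (m : σ →₀ ℕ) (a : R) : fnl φ R (monomial m a) = a * algebraMap K R (φ (monomial m 1)) := by
  have : monomial m a = a • (basisMonomials σ R) m := by simp [smul_monomial]
  rw [this, map_smul, fnl, Module.Basis.constr_basis, smul_eq_mul]

lemma fnl_map {σ : Type} (φ : MvPolynomial σ K →ₗ[K] K) {R R' : Type} [CommRing R] [Algebra K R]
    [CommRing R'] [Algebra K R'] (ψ : R →ₐ[K] R') (f : MvPolynomial σ R) :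
    fnl φ R' (map (ψ : R →+* R') f) = ψ (fnl φ R f) := by
  induction f using MvPolynomial.induction_on' with
  | monomial m a => simp [fnl_monomial, map_monomial]
  | add p q hp hq => simp [hp, hq]

lemma fnl_self {σ : Type} (φ : MvPolynomial σ K →ₗ[K] K) (f : MvPolynomial σ K) :
    fnl φ K f = φ f := by
  induction f using MvPolynomial.induction_on' with
  | monomial m a =>
    rw [fnl_monomial]
    have : monomial m a = a • monomial m (1 : K) := by simp [smul_monomial]
    rw [this, map_smul]; simp
  | add p q hp hq => simp [hp, hq]

lemma spec_indep {σ ι : Type} [Fintype ι] [DecidableEq ι] {R : Type} [CommRing R] [Algebra K R]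
    (B : ι → MvPolynomial σ R) (π : R →ₐ[K] K)
    (hli : LinearIndependent K fun i => map (π : R →+* K) (B i)) :
    ∃ D : R, π D ≠ 0 ∧ ∀ (R' : Type) [CommRing R'] [IsDomain R'] [Algebra K R'] (ψ : R →ₐ[K] R'),
      ψ D ≠ 0 → LinearIndependent R' fun i => map (ψ : R →+* R') (B i) := by
  obtain ⟨Ψ, hΨ⟩ := LinearMap.exists_leftInverse_of_injective
    (Finsupp.linearCombination K fun i => map (π : R →+* K) (B i))
    (LinearMap.ker_eq_bot.2 hli)
  let φ : ι → MvPolynomial σ K →ₗ[K] K := fun j => (Finsupp.lapply j).comp Ψ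
  have hφ : ∀ i j, φ j (map (π : R →+* K) (B i)) = if i = j then 1 else 0 := by
    intro i j
    have := LinearMap.congr_fun hΨ (Finsupp.single i 1)
    simp only [LinearMap.comp_apply, Finsupp.linearCombination_single, one_smul,
      LinearMap.id_apply] at this
    simp only [φ, LinearMap.comp_apply, this, Finsupp.lapply_apply, Finsupp.single_apply]
  let N : Matrix ι ι R := Matrix.of fun i j => fnl (φ j) R (B i)
  refine ⟨N.det, ?_, ?_⟩
  · have : (π : R →+* K).mapMatrix N = 1 := by
      ext i j
      simp only [RingHom.mapMatrix_apply, Matrix.map_apply, N, Matrix.of_apply, Matrix.one_apply]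
      rw [← hφ i j, ← fnl_self (φ j) (map _ _), fnl_map]
      rfl
    have h2 := RingHom.map_det (π : R →+* K) N
    rw [this, Matrix.det_one] at h2
    intro h
    exact one_ne_zero (h2.symm.trans h)
  · intro R' _ _ _ ψ hψ
    rw [Fintype.linearIndependent_iff]
    intro c hc
    have h2 := RingHom.map_det (ψ : R →+* R') N
    have h3 : ((ψ : R →+* R').mapMatrix N).det ≠ 0 := by rw [← h2]; exact hψ
    have h4 : c = 0 := by
      refine Matrix.eq_zero_of_vecMul_eq_zero h3 ?_
      ext j
      have := congrArg (fnl (φ j) R') hc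
      rw [map_sum, map_zero] at this
      simp only [map_smul, fnl_map, smul_eq_mul] at this
      simpa [Matrix.vecMul, dotProduct, N] using this
    intro i; exact congrFun h4 i

lemma cc_X (g : GL (Fin n) K) (i : Fin n) : coordChange K n g (X i) =
    ∑ j, ((g : Matrix (Fin n) (Fin n) K) j i) • X j := by
  simp [coordChange]

lemma cc_mul (h g : GL (Fin n) K) :
    coordChange K n (h * g) = (coordChange K n h).comp (coordChange K n g) := by
  apply MvPolynomial.algHom_ext
  intro i
  rw [AlgHom.comp_apply, cc_X, cc_X, map_sum]
  simp only [map_smul, cc_X, Finset.smul_sum, smul_smul, Units.val_mul, Matrix.mul_apply,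
    Finset.sum_smul]
  rw [Finset.sum_comm]
  refine Finset.sum_congr rfl fun j _ => Finset.sum_congr rfl fun k _ => ?_
  rw [mul_comm]

lemma cc_one : coordChange K n 1 = AlgHom.id K _ := by
  apply MvPolynomial.algHom_ext
  intro i
  rw [cc_X]
  simp [Matrix.one_apply]

lemma cc_inv_apply (g : GL (Fin n) K) (p : PS K n) :
    coordChange K n g⁻¹ (coordChange K n g p) = p := by
  rw [← AlgHom.comp_apply, ← cc_mul, inv_mul_cancel, cc_one]; rfl

lemma cc_apply_inv (g : GL (Fin n) K) (p : PS K n) :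
    coordChange K n g (coordChange K n g⁻¹ p) = p := by
  rw [← AlgHom.comp_apply, ← cc_mul, mul_inv_cancel, cc_one]; rfl

lemma cc_inj (g : GL (Fin n) K) : Function.Injective (coordChange K n g) :=
  Function.LeftInverse.injective (cc_inv_apply g)

lemma cc_surj (g : GL (Fin n) K) : Function.Surjective (coordChange K n g) :=
  Function.RightInverse.surjective (cc_apply_inv g)

lemma cc_homog (g : GL (Fin n) K) {p : PS K n} {d : ℕ} (hp : p.IsHomogeneous d) :
    (coordChange K n g p).IsHomogeneous d := by
  have := hp.aeval (S := K) (n := 1)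
    (fun i => ∑ j, ((g : Matrix (Fin n) (Fin n) K) j i) • (X j : PS K n)) (fun i => by
      apply IsHomogeneous.sum
      intro j _
      rw [smul_eq_C_mul]
      simpa using (isHomogeneous_C (Fin n) _).mul (isHomogeneous_X K j))
  rwa [one_mul] at this

lemma cc_component (g : GL (Fin n) K) (p : PS K n) (d : ℕ) :
    homogeneousComponent d (coordChange K n g p) = coordChange K n g (homogeneousComponent d p) := by
  induction p using MvPolynomial.induction_on' with
  | monomial m c =>
    have h1 : (monomial m c : PS K n).IsHomogeneous m.degree := isHomogeneous_monomial c rfl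
    rw [homogeneousComponent_of_mem h1, homogeneousComponent_of_mem (cc_homog g h1)]
    split_ifs <;> simp
  | add p q hp hq => simp [map_add, hp, hq]

lemma mem_map_cc (g : GL (Fin n) K) (J : Ideal (PS K n)) (p : PS K n) :
    p ∈ Ideal.map (coordChange K n g) J ↔ ∃ q ∈ J, coordChange K n g q = p :=
  Ideal.mem_map_iff_of_surjective _ (cc_surj g)

lemma map_cc_homog (g : GL (Fin n) K) {J : Ideal (PS K n)} (hJ : IsHomog K n J) :
    IsHomog K n (Ideal.map (coordChange K n g) J) := by
  intro f hf d
  obtain ⟨q, hq, rfl⟩ := (mem_map_cc g J f).1 hf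
  exact (mem_map_cc g J _).2 ⟨_, hJ q hq d, (cc_component g q d).symm⟩

lemma mem_dg_map (g : GL (Fin n) K) (J : Ideal (PS K n)) (d : ℕ) (p : PS K n) :
    p ∈ dgPiece (Ideal.map (coordChange K n g) J) d ↔
      ∃ q ∈ dgPiece J d, coordChange K n g q = p := by
  constructor
  · rintro ⟨h1, h2⟩
    obtain ⟨q, hq, rfl⟩ := (mem_map_cc g J p).1 h1
    refine ⟨q, ⟨hq, ?_⟩, rfl⟩
    have := cc_homog g⁻¹ h2
    rwa [cc_inv_apply] at this
  · rintro ⟨q, ⟨h1, h2⟩, rfl⟩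
    exact ⟨(mem_map_cc g J _).2 ⟨q, h1, rfl⟩, cc_homog g h2⟩

lemma finrank_dg_map (g : GL (Fin n) K) (J : Ideal (PS K n)) (d : ℕ) :
    Module.finrank K (dgPiece (Ideal.map (coordChange K n g) J) d) =
      Module.finrank K (dgPiece J d) := by
  have : dgPiece (Ideal.map (coordChange K n g) J) d =
      (dgPiece J d).map (coordChange K n g).toLinearMap := by
    ext p
    rw [mem_dg_map]
    rfl
  rw [this]
  exact (Submodule.equivMapOfInjective (coordChange K n g).toLinearMap (cc_inj g)
    (dgPiece J d)).finrank_eq.symm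

lemma map_map_cc (h g : GL (Fin n) K) (J : Ideal (PS K n)) :
    Ideal.map (coordChange K n h) (Ideal.map (coordChange K n g) J) =
      Ideal.map (coordChange K n (h * g)) J := by
  ext p
  rw [mem_map_cc, mem_map_cc]
  constructor
  · rintro ⟨x, hx, rfl⟩
    obtain ⟨q, hq, rfl⟩ := (mem_map_cc _ _ _).1 hx
    exact ⟨q, hq, by rw [cc_mul]; rfl⟩
  · rintro ⟨q, hq, rfl⟩
    exact ⟨_, (mem_map_cc _ _ _).2 ⟨q, hq, rfl⟩, by rw [cc_mul]; rfl⟩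

lemma map_cc_one (J : Ideal (PS K n)) : Ideal.map (coordChange K n 1) J = J := by
  ext p
  rw [mem_map_cc]
  simp [cc_one]

/-- Universal coordinate change. -/
def univCC (K : Type) [Field K] (n : ℕ) :
    PS K n →ₐ[K] MvPolynomial (Fin n) (MvPolynomial (Fin n × Fin n) K) :=
  aeval fun i => ∑ j, C (X (j, i)) * X j

/-- Evaluation at a matrix. -/
def evG (g : GL (Fin n) K) : MvPolynomial (Fin n × Fin n) K →ₐ[K] K :=
  aeval fun p => (g : Matrix (Fin n) (Fin n) K) p.1 p.2

lemma evG_eq (g : GL (Fin n) K) (F : MvPolynomial (Fin n × Fin n) K) :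
    evG g F = MvPolynomial.eval (fun p => (g : Matrix (Fin n) (Fin n) K) p.1 p.2) F := by
  simp [evG, MvPolynomial.aeval_eq_eval]

lemma univCC_spec (g : GL (Fin n) K) (q : PS K n) :
    map (evG g : MvPolynomial (Fin n × Fin n) K →+* K) (univCC K n q) = coordChange K n g q := by
  induction q using MvPolynomial.induction_on with
  | C a =>
    rw [← MvPolynomial.algebraMap_eq, AlgHom.commutes, AlgHom.commutes,
      IsScalarTower.algebraMap_apply K (MvPolynomial (Fin n × Fin n) K)
      (MvPolynomial (Fin n) (MvPolynomial (Fin n × Fin n) K)), MvPolynomial.algebraMap_eq, map_C]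
    simp
  | add p q hp hq => simp [hp, hq]
  | mul_X p i hp =>
    rw [map_mul, map_mul, map_mul, hp, cc_X]
    congr 1
    simp [univCC, evG, map_sum, smul_eq_C_mul]

lemma const_spec (g : GL (Fin n) K) (p : PS K n) :
    map (evG g : MvPolynomial (Fin n × Fin n) K →+* K)
      (map (C : K →+* MvPolynomial (Fin n × Fin n) K) p) = p := by
  rw [MvPolynomial.map_map]
  convert MvPolynomial.map_id p
  ext a
  simp [evG]

lemma univCC_homog {p : PS K n} {d : ℕ} (hp : p.IsHomogeneous d) :
    (univCC K n p).IsHomogeneous d := by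
  have := hp.aeval (S := MvPolynomial (Fin n × Fin n) K) (n := 1)
    (fun i => ∑ j, C (X (j, i)) * X j) (fun i => by
      apply IsHomogeneous.sum
      intro j _
      simpa using (isHomogeneous_C (Fin n) _).mul (isHomogeneous_X _ j))
  rwa [one_mul] at this

lemma generic_bound (I J : Ideal (PS K n)) (hI : IsHomog K n I) (hJ : IsHomog K n J) :
    ∃ F : MvPolynomial (Fin n × Fin n) K, F ≠ 0 ∧ ∀ g : GL (Fin n) K, evG g F ≠ 0 →
      ∀ (d : ℕ) (ι : Type) [Fintype ι] (g' : GL (Fin n) K) (b : ι → PS K n),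
        LinearIndependent K b →
        (∀ i, b i ∈ dgPiece I d ∨ b i ∈ dgPiece (Ideal.map (coordChange K n g') J) d) →
        Fintype.card ι ≤ Module.finrank K
          ↥(dgPiece I d ⊔ dgPiece (Ideal.map (coordChange K n g) J) d) := by
  classical
  let cst : PS K n →+* MvPolynomial (Fin n) (MvPolynomial (Fin n × Fin n) K) := map C
  let T := Ideal.map cst I ⊔ Ideal.map (univCC K n) J
  have hspec : ∀ (g : GL (Fin n) K) (f), f ∈ T →
      map (evG g : MvPolynomial (Fin n × Fin n) K →+* K) f ∈
        I ⊔ Ideal.map (coordChange K n g) J := by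
    intro g
    suffices T ≤ Ideal.comap (map (evG g : MvPolynomial (Fin n × Fin n) K →+* K))
        (I ⊔ Ideal.map (coordChange K n g) J) from fun f hf => this hf
    refine sup_le ?_ ?_
    · rw [Ideal.map_le_iff_le_comap]
      intro p hp
      rw [Ideal.mem_comap, Ideal.mem_comap]
      simp only [cst]
      rw [const_spec]
      exact Ideal.mem_sup_left hp
    · rw [Ideal.map_le_iff_le_comap]
      intro p hp
      rw [Ideal.mem_comap, Ideal.mem_comap]
      rw [univCC_spec]
      exact Ideal.mem_sup_right (Ideal.mem_map_of_mem _ hp)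
  let M : Set (Fin n →₀ ℕ) := {m | ∃ f ∈ T, IsLM (lexLt n) f m}
  obtain ⟨M0, hM0, hmin⟩ := finite_min M
  choose f hfT hfLM using hM0
  refine ⟨∏ m ∈ M0.attach, coeff m.1 (f m.1 m.2), ?_, ?_⟩
  · rw [Finset.prod_ne_zero_iff]
    intro m _
    exact mem_support_iff.1 (hfLM m.1 m.2).1
  intro g hg d ι _ g' b hli hb
  rw [map_prod, Finset.prod_ne_zero_iff] at hg
  have hAh : IsHomog K n (I ⊔ Ideal.map (coordChange K n g) J) := by
    intro p hp e
    obtain ⟨x, hx, y, hy, rfl⟩ := Submodule.mem_sup.1 hp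
    rw [map_add]
    exact Submodule.add_mem_sup (hI x hx e) (map_cc_homog g hJ y hy e)
  have hMd : {m ∈ M | m.degree = d} ⊆
      LMset (lexLt n) (dgPiece (I ⊔ Ideal.map (coordChange K n g) J) d) := by
    rintro m ⟨hm, rfl⟩
    obtain ⟨m0, hm0, hle⟩ := hmin m hm
    refine LM_up lexOK.add hAh (hspec g _ (hfT m0 hm0)) ⟨?_, ?_⟩ hle
    · rw [mem_support_iff, coeff_map]
      exact hg ⟨m0, hm0⟩ (Finset.mem_attach _ _)
    · intro m' hm'
      exact (hfLM m0 hm0).2 m' (support_map_subset _ _ hm')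
  have hle1 : dgPiece (I ⊔ Ideal.map (coordChange K n g) J) d ≤
      dgPiece I d ⊔ dgPiece (Ideal.map (coordChange K n g) J) d := by
    rintro p ⟨hp, hpd⟩
    obtain ⟨x, hx, y, hy, rfl⟩ := Submodule.mem_sup.1 hp
    have : x + y = homogeneousComponent d x + homogeneousComponent d y := by
      rw [← map_add]
      exact (homogeneousComponent_eq_self hpd).symm
    rw [this]
    exact Submodule.add_mem_sup ⟨hI x hx d, homogeneousComponent_mem _ _⟩
      ⟨map_cc_homog g hJ y hy d, homogeneousComponent_mem _ _⟩
  refine le_trans ?_ (Submodule.finrank_mono hle1)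
  rw [finrank_eq_LM (lexOK (n := n)) (inf_le_right :
    dgPiece (I ⊔ Ideal.map (coordChange K n g) J) d ≤ _)]
  have hLfin : (LMset (lexLt n) (dgPiece (I ⊔ Ideal.map (coordChange K n g) J) d)).Finite :=
    LMset_finite inf_le_right
  refine le_trans ?_ (Set.ncard_le_ncard hMd hLfin)
  have hMfin := hLfin.subset hMd
  -- lifts
  have hlift : ∀ i, ∃ B ∈ T, B.IsHomogeneous d ∧
      map (evG g' : MvPolynomial (Fin n × Fin n) K →+* K) B = b i := by
    intro i
    rcases hb i with h | h
    · exact ⟨cst (b i), Ideal.mem_sup_left (Ideal.mem_map_of_mem _ h.1),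
        IsHomogeneous.map h.2 _, const_spec g' _⟩
    · obtain ⟨q, hq, hqe⟩ := (mem_dg_map g' J d _).1 h
      exact ⟨univCC K n q, Ideal.mem_sup_right (Ideal.mem_map_of_mem _ hq.1),
        univCC_homog hq.2, by rw [univCC_spec, hqe]⟩
  choose B hBT hBh hBs using hlift
  obtain ⟨D, hD, hDψ⟩ := spec_indep B (evG g') (by simpa only [hBs] using hli)
  have hD0 : D ≠ 0 := fun h => hD (by simp [h])
  have hBli := hDψ _ (AlgHom.id K _) hD0
  have hBli' : LinearIndependent (MvPolynomial (Fin n × Fin n) K) B := by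
    have hBe : (fun i => map ((AlgHom.id K (MvPolynomial (Fin n × Fin n) K) :
        MvPolynomial (Fin n × Fin n) K →ₐ[K] MvPolynomial (Fin n × Fin n) K) :
        MvPolynomial (Fin n × Fin n) K →+* MvPolynomial (Fin n × Fin n) K) (B i)) = B :=
      funext fun i => MvPolynomial.map_id (B i)
    rw [hBe] at hBli
    exact hBli
  have := hMfin.to_subtype
  have := Fintype.ofFinite {m ∈ M | m.degree = d}
  have hcard : Fintype.card {m ∈ M | m.degree = d} = {m ∈ M | m.degree = d}.ncard := by
    rw [← Nat.card_coe_set_eq, Nat.card_eq_fintype_card]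
  rw [← hcard]
  let Λ := Fintype.linearCombination (MvPolynomial (Fin n × Fin n) K) B
  refine card_le_of_injective (MvPolynomial (Fin n × Fin n) K)
    ((LinearMap.pi fun m : {m ∈ M | m.degree = d} =>
      lcoeff (MvPolynomial (Fin n × Fin n) K) m.1).comp Λ) ?_
  rw [← LinearMap.ker_eq_bot, LinearMap.ker_eq_bot']
  intro c hc
  have hΛ : Λ c = ∑ i, c i • B i := Fintype.linearCombination_apply ..
  have hz : ∑ i, c i • B i = 0 := by
    by_contra h0
    have hh : (∑ i, c i • B i).IsHomogeneous d := by
      apply IsHomogeneous.sum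
      intro i _
      rw [smul_eq_C_mul]
      simpa using (isHomogeneous_C (Fin n) _).mul (hBh i)
    have hT : (∑ i, c i • B i) ∈ T := by
      refine T.sum_mem fun i _ => ?_
      rw [smul_eq_C_mul]
      exact T.mul_mem_left _ (hBT i)
    obtain ⟨m, hm⟩ := exists_LM (lexOK (n := n)) hh h0
    have := congrFun hc ⟨m, ⟨_, hT, hm⟩, deg_of_homog hh hm.1⟩
    apply mem_support_iff.1 hm.1
    rw [← hΛ]
    exact this
  funext i
  exact Fintype.linearIndependent_iff.1 hBli' c hz i

/-- Torus element. -/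
def torus (ω : Fin n → ℕ) (t : K) (ht : t ≠ 0) : GL (Fin n) K :=
  Matrix.GeneralLinearGroup.mkOfDetNeZero (Matrix.diagonal fun i => (t ^ ω i)⁻¹) (by
    rw [Matrix.det_diagonal, Finset.prod_ne_zero_iff]
    intro i _
    exact inv_ne_zero (pow_ne_zero _ ht))

lemma torus_monomial (ω : Fin n → ℕ) (t : K) (ht : t ≠ 0) (m : Fin n →₀ ℕ) (a : K) :
    coordChange K n (torus ω t ht) (monomial m a) = monomial m (a * (t ^ wsum ω m)⁻¹) := by
  have hX : ∀ i, coordChange K n (torus ω t ht) (X i) = C (t ^ ω i)⁻¹ * X i := by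
    intro i
    rw [cc_X, Finset.sum_eq_single i]
    · simp [torus, Matrix.GeneralLinearGroup.mkOfDetNeZero, smul_eq_C_mul]
    · intro j _ hj
      simp [torus, Matrix.GeneralLinearGroup.mkOfDetNeZero, Matrix.diagonal_apply_ne _ hj]
    · simp
  rw [monomial_eq, monomial_eq, map_mul, Finsupp.prod_fintype _ _ (by simp), map_prod]
  simp only [map_pow, hX, mul_pow, Finset.prod_mul_distrib]
  rw [← MvPolynomial.algebraMap_eq, AlgHom.commutes, MvPolynomial.algebraMap_eq, C_mul, mul_assoc]
  congr 2
  rw [wsum, ← Finset.prod_pow_eq_pow_sum, ← Finset.prod_inv_distrib, map_prod]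
  refine Finset.prod_congr rfl fun i _ => ?_
  rw [← map_pow, inv_pow, pow_mul]

/-- The one-parameter deformation of `f` to its leading term. -/
def deform (ω : Fin n → ℕ) (m : Fin n →₀ ℕ) (f : PS K n) : MvPolynomial (Fin n) (Polynomial K) :=
  ∑ m' ∈ f.support, monomial m' (Polynomial.C (coeff m' f) * Polynomial.X ^ (wsum ω m - wsum ω m'))

lemma deform_zero (ω : Fin n → ℕ) (m : Fin n →₀ ℕ) (f : PS K n)
    (h : IsLM (fun a b => wsum ω a < wsum ω b) f m) :
    MvPolynomial.map ((Polynomial.aeval (0 : K) : Polynomial K →ₐ[K] K) : Polynomial K →+* K) (deform ω m f) =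
      monomial m (coeff m f) := by
  rw [deform, map_sum, Finset.sum_eq_single m]
  · simp [map_monomial]
  · intro b hb hbm
    rcases h.2 b hb with h1 | h1
    · exact absurd h1 hbm
    · have : wsum ω m - wsum ω b ≠ 0 := by omega
      simp [map_monomial, this]
  · intro hm; exact absurd h.1 hm

lemma deform_t (ω : Fin n → ℕ) (m : Fin n →₀ ℕ) (f : PS K n)
    (h : IsLM (fun a b => wsum ω a < wsum ω b) f m) (t : K) (ht : t ≠ 0) :
    MvPolynomial.map ((Polynomial.aeval t : Polynomial K →ₐ[K] K) : Polynomial K →+* K) (deform ω m f) =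
      (t ^ wsum ω m) • coordChange K n (torus ω t ht) f := by
  conv_rhs => rw [f.as_sum]
  rw [deform, map_sum, map_sum, Finset.smul_sum]
  refine Finset.sum_congr rfl fun b hb => ?_
  rw [torus_monomial, smul_monomial, map_monomial]
  congr 1
  have hle : wsum ω b ≤ wsum ω m := by
    rcases h.2 b hb with h1 | h1
    · rw [h1]
    · exact h1.le
  have hne : t ^ wsum ω b ≠ 0 := pow_ne_zero _ ht
  have : t ^ wsum ω m = t ^ (wsum ω m - wsum ω b) * t ^ wsum ω b := by
    rw [← pow_add, Nat.sub_add_cancel hle]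
  rw [this]
  simp
  field_simp

lemma IsLM_wt {r : (Fin n →₀ ℕ) → (Fin n →₀ ℕ) → Prop} {d : ℕ} {ω : Fin n → ℕ}
    (hω : ∀ a b : Fin n →₀ ℕ, a.degree = d → b.degree = d → r a b → wsum ω a < wsum ω b)
    {f : PS K n} (hf : f.IsHomogeneous d) {m : Fin n →₀ ℕ} (h : IsLM r f m) :
    IsLM (fun a b => wsum ω a < wsum ω b) f m :=
  ⟨h.1, fun m' hm' => (h.2 m' hm').imp id
    (hω _ _ (deg_of_homog hf hm') (deg_of_homog hf h.1))⟩

lemma deform_exists [Infinite K] {r1 r2 : (Fin n →₀ ℕ) → (Fin n →₀ ℕ) → Prop} (hr1 : OrdOK r1)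
    (hr2 : OrdOK r2) (A B : Ideal (PS K n)) (d : ℕ) :
    ∃ (δ1 δ2 : GL (Fin n) K) (b : ↥(LMset r1 (dgPiece A d) ∪ LMset r2 (dgPiece B d)) → PS K n),
      LinearIndependent K b ∧
      ∀ i, b i ∈ dgPiece (Ideal.map (coordChange K n δ1) A) d ∨
        b i ∈ dgPiece (Ideal.map (coordChange K n δ2) B) d := by
  classical
  obtain ⟨ω1, hω1⟩ := hr1.wt d
  obtain ⟨ω2, hω2⟩ := hr2.wt d
  have hfin : (LMset r1 (dgPiece A d) ∪ LMset r2 (dgPiece B d)).Finite :=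
    (LMset_finite inf_le_right).union (LMset_finite inf_le_right)
  have := hfin.to_subtype
  have := Fintype.ofFinite ↥(LMset r1 (dgPiece A d) ∪ LMset r2 (dgPiece B d))
  have hex : ∀ i : ↥(LMset r1 (dgPiece A d) ∪ LMset r2 (dgPiece B d)),
      ∃ E : MvPolynomial (Fin n) (Polynomial K),
        (∃ a : K, a ≠ 0 ∧ MvPolynomial.map ((Polynomial.aeval (0 : K) : Polynomial K →ₐ[K] K) : Polynomial K →+* K) E =
          monomial i.1 a) ∧
        ∀ (t : K) (ht : t ≠ 0), MvPolynomial.map ((Polynomial.aeval t : Polynomial K →ₐ[K] K) : Polynomial K →+* K) E ∈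
            dgPiece (Ideal.map (coordChange K n (torus ω1 t ht)) A) d ∨
          MvPolynomial.map ((Polynomial.aeval t : Polynomial K →ₐ[K] K) : Polynomial K →+* K) E ∈
            dgPiece (Ideal.map (coordChange K n (torus ω2 t ht)) B) d := by
    rintro ⟨m, ⟨f, hf, hlm⟩ | ⟨f, hf, hlm⟩⟩
    · have h := IsLM_wt hω1 hf.2 hlm
      refine ⟨deform ω1 m f, ⟨_, mem_support_iff.1 hlm.1, deform_zero _ _ _ h⟩, fun t ht => Or.inl ?_⟩
      rw [deform_t _ _ _ h t ht]
      exact Submodule.smul_mem _ _ ((mem_dg_map _ _ _ _).2 ⟨f, hf, rfl⟩)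
    · have h := IsLM_wt hω2 hf.2 hlm
      refine ⟨deform ω2 m f, ⟨_, mem_support_iff.1 hlm.1, deform_zero _ _ _ h⟩, fun t ht => Or.inr ?_⟩
      rw [deform_t _ _ _ h t ht]
      exact Submodule.smul_mem _ _ ((mem_dg_map _ _ _ _).2 ⟨f, hf, rfl⟩)
  choose E hE0 hEt using hex
  obtain ⟨D, hD, hψ⟩ := spec_indep E (Polynomial.aeval (0 : K)) (by
    choose a ha hEa using hE0
    refine linIndep_of_LM (wsum ω1) _ (fun i => i.1) Subtype.val_injective fun i => ?_
    rw [hEa]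
    refine ⟨by simp [ha i], fun m' hm' => Or.inl ?_⟩
    exact Finset.mem_singleton.1 (support_monomial_subset hm'))
  have hD0 : D * Polynomial.X ≠ 0 :=
    mul_ne_zero (fun h => hD (by simp [h])) Polynomial.X_ne_zero
  obtain ⟨t, ht⟩ : ∃ t : K, (D * Polynomial.X).eval t ≠ 0 := by
    by_contra! h
    exact hD0 (Polynomial.funext fun t => by simpa using h t)
  rw [Polynomial.eval_mul, Polynomial.eval_X] at ht
  have ht0 : t ≠ 0 := right_ne_zero_of_mul ht
  exact ⟨torus ω1 t ht0, torus ω2 t ht0, _,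
    hψ K (Polynomial.aeval t) (by simpa using left_ne_zero_of_mul ht), fun i => hEt i t ht0⟩

lemma generally_exists [Infinite K] {P : GL (Fin n) K → Prop} (h : generally K n P) : ∃ g, P g := by
  obtain ⟨F, hF, hP⟩ := h
  have hdet : (Matrix.det (Matrix.of fun i j => (X (i, j) : MvPolynomial (Fin n × Fin n) K))) ≠ 0 := by
    intro h0
    have := congrArg (MvPolynomial.eval fun p : Fin n × Fin n => (1 : Matrix (Fin n) (Fin n) K) p.1 p.2) h0
    rw [RingHom.map_det, map_zero] at this
    have h2 : (MvPolynomial.eval fun p : Fin n × Fin n =>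
        (1 : Matrix (Fin n) (Fin n) K) p.1 p.2).mapMatrix
        (Matrix.of fun i j => (X (i, j) : MvPolynomial (Fin n × Fin n) K)) = 1 := by
      ext i j; simp
    rw [h2, Matrix.det_one] at this
    exact one_ne_zero this
  obtain ⟨x, hx⟩ : ∃ x, MvPolynomial.eval x (F * Matrix.det (Matrix.of fun i j =>
      (X (i, j) : MvPolynomial (Fin n × Fin n) K))) ≠ 0 := by
    by_contra! h
    exact mul_ne_zero hF hdet (MvPolynomial.funext fun t => by simpa using h t)
  rw [map_mul, RingHom.map_det] at hx
  have h2 : (MvPolynomial.eval x).mapMatrix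
      (Matrix.of fun i j => (X (i, j) : MvPolynomial (Fin n × Fin n) K)) =
      Matrix.of fun i j => x (i, j) := by
    ext i j; simp
  rw [h2] at hx
  exact ⟨Matrix.GeneralLinearGroup.mkOfDetNeZero _ (right_ne_zero_of_mul hx),
    hP _ (by simpa [Matrix.GeneralLinearGroup.mkOfDetNeZero] using left_ne_zero_of_mul hx)⟩

lemma final_step [Infinite K] (I J : Ideal (PS K n)) (hI : IsHomog K n I) (hJ : IsHomog K n J)
    (g1 g2 : GL (Fin n) K) {GinI GinJ : Ideal (PS K n)}
    (hg1 : initialIdealO K n (lexLt n) (Ideal.map (coordChange K n g1) I) = GinI)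
    (hg2 : initialIdealO K n (oplexLt n) (Ideal.map (coordChange K n g2) J) = GinJ)
    (g : GL (Fin n) K)
    (hF : ∀ (d : ℕ) (ι : Type) [Fintype ι] (g' : GL (Fin n) K) (b : ι → PS K n),
        LinearIndependent K b →
        (∀ i, b i ∈ dgPiece I d ∨ b i ∈ dgPiece (Ideal.map (coordChange K n g') J) d) →
        Fintype.card ι ≤ Module.finrank K
          ↥(dgPiece I d ⊔ dgPiece (Ideal.map (coordChange K n g) J) d)) (d : ℕ) :
    hilb K n (I ⊓ Ideal.map (coordChange K n g) J) d ≤ hilb K n (GinI ⊓ GinJ) d := by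
  classical
  set P := LMset (lexLt n) (dgPiece (Ideal.map (coordChange K n g1) I) d) with hPdef
  set Q := LMset (oplexLt n) (dgPiece (Ideal.map (coordChange K n g2) J) d) with hQdef
  have hPf : P.Finite := LMset_finite inf_le_right
  have hQf : Q.Finite := LMset_finite inf_le_right
  have hP : dgPiece GinI d = restrictSupport K P := by
    rw [← hg1]; exact dg_initial lexOK (map_cc_homog g1 hI) d
  have hQ : dgPiece GinJ d = restrictSupport K Q := by
    rw [← hg2]; exact dg_initial oplexOK (map_cc_homog g2 hJ) d
  have hright : hilb K n (GinI ⊓ GinJ) d = (P ∩ Q).ncard := by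
    rw [← finrank_restrictSupport (K := K)]
    have : dgPiece (GinI ⊓ GinJ) d = restrictSupport K (P ∩ Q) := by
      have h1 : dgPiece (GinI ⊓ GinJ) d = dgPiece GinI d ⊓ dgPiece GinJ d := by
        ext p
        simp only [Submodule.mem_inf, Submodule.restrictScalars_mem]
        tauto
      rw [h1, hP, hQ]
      ext p
      simp only [Submodule.mem_inf, mem_restrictSupport_iff, Set.subset_inter_iff]
    unfold hilb
    exact congrArg (fun W : Submodule K (PS K n) => Module.finrank K W) this
  have hIP : Module.finrank K (dgPiece I d) = P.ncard := by
    rw [← finrank_dg_map g1, finrank_eq_LM (lexOK (n := n)) inf_le_right]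
  have hJQ : Module.finrank K (dgPiece (Ideal.map (coordChange K n g) J) d) = Q.ncard := by
    rw [finrank_dg_map g, ← finrank_dg_map g2, finrank_eq_LM (oplexOK (n := n)) inf_le_right]
  have hleft : hilb K n (I ⊓ Ideal.map (coordChange K n g) J) d =
      Module.finrank K ↥(dgPiece I d ⊓ dgPiece (Ideal.map (coordChange K n g) J) d) := by
    have h1 : dgPiece (I ⊓ Ideal.map (coordChange K n g) J) d =
        dgPiece I d ⊓ dgPiece (Ideal.map (coordChange K n g) J) d := by
      ext p
      simp only [Submodule.mem_inf, Submodule.restrictScalars_mem]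
      tauto
    unfold hilb
    exact congrArg (fun W : Submodule K (PS K n) => Module.finrank K W) h1
  have hsum := Submodule.finrank_sup_add_finrank_inf_eq (dgPiece I d)
    (dgPiece (Ideal.map (coordChange K n g) J) d)
  have hPQ := Set.ncard_union_add_ncard_inter P Q hPf hQf
  have hkey : (P ∪ Q).ncard ≤ Module.finrank K
      ↥(dgPiece I d ⊔ dgPiece (Ideal.map (coordChange K n g) J) d) := by
    obtain ⟨δ1, δ2, b, hli, hb⟩ := deform_exists (lexOK (n := n)) (oplexOK (n := n))
      (Ideal.map (coordChange K n g1) I) (Ideal.map (coordChange K n g2) J) d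
    have := (hPf.union hQf).to_subtype
    have := Fintype.ofFinite ↥(P ∪ Q)
    have hcard : Fintype.card ↥(P ∪ Q) = (P ∪ Q).ncard := by
      rw [← Nat.card_coe_set_eq, Nat.card_eq_fintype_card]
    rw [← hcard]
    refine hF d ↥(P ∪ Q) ((δ1 * g1)⁻¹ * (δ2 * g2))
      (fun i => coordChange K n (δ1 * g1)⁻¹ (b i)) ?_ ?_
    · exact hli.map' (coordChange K n (δ1 * g1)⁻¹).toLinearMap
        (LinearMap.ker_eq_bot.2 (cc_inj _))
    · intro i
      refine (hb i).imp (fun h => ?_) (fun h => ?_)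
      · have h2 := (mem_dg_map (δ1 * g1)⁻¹ _ d _).2 ⟨_, h, rfl⟩
        rwa [map_map_cc, map_map_cc, mul_assoc, inv_mul_cancel, map_cc_one] at h2
      · have h2 := (mem_dg_map (δ1 * g1)⁻¹ _ d _).2 ⟨_, h, rfl⟩
        rwa [map_map_cc, map_map_cc, mul_assoc] at h2
  omega

end Aux

/-- **Corollary 2.9(i)** (Caviglia–Murai): for homogeneous ideals `I, J ⊆ S` and a general
change of coordinates `g ∈ GL_n(K)`,
`H(I ∩ g(J), d) ≤ H(Gin_lex(I) ∩ Gin_oplex(J), d)` for all `d ≥ 0`. -/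
theorem hilb_general_intersection_le_gins [Infinite K]
    (I J : Ideal (PS K n)) (hI : IsHomog K n I) (hJ : IsHomog K n J)
    (GinI : Ideal (PS K n))
    (hGinI : generally K n (fun g =>
      initialIdealO K n (lexLt n) (Ideal.map (coordChange K n g) I) = GinI))
    (GinJ : Ideal (PS K n))
    (hGinJ : generally K n (fun g =>
      initialIdealO K n (oplexLt n) (Ideal.map (coordChange K n g) J) = GinJ))
 :
    generally K n (fun g => ∀ d : ℕ,
      hilb K n (I ⊓ Ideal.map (coordChange K n g) J) d ≤ hilb K n (GinI ⊓ GinJ) d) := by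
  obtain ⟨g1, hg1⟩ := generally_exists hGinI
  obtain ⟨g2, hg2⟩ := generally_exists hGinJ
  obtain ⟨F, hF0, hF⟩ := generic_bound I J hI hJ
  refine ⟨F, hF0, fun g hg d => ?_⟩
  rw [← evG_eq] at hg
  exact final_step I J hI hJ g1 g2 hg1 hg2 g (hF g hg) d

end
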